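/- Suppose X is a c-quasiconvex metric space, G ⊊ X is a b-uniform domain, γ is a (ν,h)-solid arc in G with endpoints x, y, and x₀ ∈ γ satisfies δ_G(x₀) = max_{p∈γ} δ_G(p). Then there is a constant μ₂ = μ₂(b,ν,h) ≥ 1 such that diam(γ[x,u]) ≤ μ₂·δ_G(u) for all u ∈ γ[x, x₀], and diam(γ[y,v]) ≤ μ₂·δ_G(v) for all v ∈ γ[y, x₀]. -/

import Mathlib

open Metric Set Filter

section QHDefs

variable {X : Type*} [MetricSpace X] {Y : Type*} [MetricSpace Y]

/-- Distance to the boundary of `G`. -/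
noncomputable def bdist (G : Set X) (z : X) : ℝ := Metric.infDist z (frontier G)

/-- A unit-speed (1-Lipschitz, arclength-parametrized) rectifiable curve in `G`
from `x` to `y`, parametrized on `[0, L]`, where `L` is its length. -/
structure CurveIn (G : Set X) (γ : ℝ → X) (L : ℝ) (x y : X) : Prop where
  nonneg : 0 ≤ L
  lip : LipschitzOnWith 1 γ (Set.Icc 0 L)
  source : γ 0 = x
  target : γ L = y
  mem : ∀ t ∈ Set.Icc 0 L, γ t ∈ G

/-- Quasihyperbolic length of the subcurve `γ|[s,t]` in `G`: `∫_γ |dz|/δ_G(z)`. -/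
noncomputable def qhLengthOn (G : Set X) (γ : ℝ → X) (s t : ℝ) : ℝ :=
  ∫ u in s..t, 1 / bdist G (γ u)

/-- Quasihyperbolic length of a curve parametrized on `[0,L]`. -/
noncomputable def qhLength (G : Set X) (γ : ℝ → X) (L : ℝ) : ℝ := qhLengthOn G γ 0 L

/-- Quasihyperbolic distance in `G`. -/
noncomputable def qhDist (G : Set X) (x y : X) : ℝ :=
  sInf {l | ∃ γ L, CurveIn G γ L x y ∧ qhLength G γ L = l}

/-- `X` is a `c`-quasiconvex metric space. -/
def QCSpace (c : ℝ) (X : Type*) [MetricSpace X] : Prop :=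
  ∀ x y : X, ∃ γ L, CurveIn (Set.univ : Set X) γ L x y ∧ L ≤ c * dist x y

/-- A set `G` is `c`-quasiconvex. -/
def QCSet (c : ℝ) (G : Set X) : Prop :=
  ∀ x ∈ G, ∀ y ∈ G, ∃ γ L, CurveIn G γ L x y ∧ L ≤ c * dist x y

/-- A domain: a nonempty connected open set. -/
def IsDomainSet (G : Set X) : Prop := IsOpen G ∧ IsConnected G

/-- A proper domain: a nonempty connected open set, different from the whole space. -/
def IsProperDomain (G : Set X) : Prop := IsOpen G ∧ IsConnected G ∧ G ≠ Set.univ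

/-- `G` is an `a`-John domain: each pair of points is joined by a rectifiable arc
satisfying the cone condition. -/
def IsJohn (a : ℝ) (G : Set X) : Prop :=
  ∀ x ∈ G, ∀ y ∈ G, ∃ γ L, CurveIn G γ L x y ∧
    ∀ t ∈ Set.Icc 0 L, min t (L - t) ≤ a * bdist G (γ t)

/-- `G` is a `b`-uniform domain: each pair of points is joined by a double `b`-cone arc. -/
def IsUniform (b : ℝ) (G : Set X) : Prop :=
  ∀ x ∈ G, ∀ y ∈ G, ∃ γ L, CurveIn G γ L x y ∧ L ≤ b * dist x y ∧
    ∀ t ∈ Set.Icc 0 L, min t (L - t) ≤ b * bdist G (γ t)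

/-- `G` is a locally `a`-John domain. -/
def LocallyJohn (a : ℝ) (G : Set X) : Prop :=
  ∀ x ∈ G, ∀ r : ℝ, 0 < r → r ≤ bdist G x → IsJohn a (Metric.ball x r)

/-- The `h`-coarse quasihyperbolic length of the subcurve `γ|[s,t]` in `G`:
the supremum of sums `Σ k_G(x_{j-1},x_j)` over `h`-coarse sequences of successive
points of the arc (with the convention that it is `0` if there are none). -/
noncomputable def coarseQHLength (G : Set X) (γ : ℝ → X) (s t h : ℝ) : ℝ :=
  sSup {S | ∃ n : ℕ, 0 < n ∧ ∃ u : ℕ → ℝ,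
    (∀ i < n, u i ≤ u (i + 1)) ∧ (∀ i ≤ n, u i ∈ Set.Icc s t) ∧
    (∀ i < n, h ≤ qhDist G (γ (u i)) (γ (u (i + 1)))) ∧
    S = ∑ i ∈ Finset.range n, qhDist G (γ (u i)) (γ (u (i + 1)))}

/-- `γ` (parametrized on `[0,L]`) is a `(ν,h)`-solid arc in `G`. -/
def SolidArc (G : Set X) (γ : ℝ → X) (L ν h : ℝ) : Prop :=
  ∀ s t : ℝ, 0 ≤ s → s ≤ t → t ≤ L →
    coarseQHLength G γ s t h ≤ ν * qhDist G (γ s) (γ t)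

/-- `γ` (parametrized on `[0,L]`) is an `ε`-short arc in `G`. -/
def ShortArc (G : Set X) (γ : ℝ → X) (L ε : ℝ) : Prop :=
  qhLength G γ L ≤ qhDist G (γ 0) (γ L) + ε

/-- A map is weakly `H`-quasisymmetric. -/
def WeakQS (H : ℝ) (f : X → Y) : Prop :=
  ∀ x a b : X, dist x a ≤ dist x b → dist (f x) (f a) ≤ H * dist (f x) (f b)

/-- Image of a subset `D ⊆ G` under a homeomorphism `f : G ≃ₜ G'`, as a subset of `Y`. -/
def imSet {G : Set X} {G' : Set Y} (f : ↥G ≃ₜ ↥G') (D : Set X) : Set Y :=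
  Subtype.val '' (f '' (Subtype.val ⁻¹' D))

/-- `f : G ≃ₜ G'` is `M`-quasihyperbolic. -/
def MQH (M : ℝ) {G : Set X} {G' : Set Y} (f : ↥G ≃ₜ ↥G') : Prop :=
  ∀ x y : ↥G, (1 / M) * qhDist G ↑x ↑y ≤ qhDist G' ↑(f x) ↑(f y) ∧
    qhDist G' ↑(f x) ↑(f y) ≤ M * qhDist G ↑x ↑y

/-- `f : G ≃ₜ G'` is `C`-coarsely `M`-quasihyperbolic. -/
def CQH (M C : ℝ) {G : Set X} {G' : Set Y} (f : ↥G ≃ₜ ↥G') : Prop :=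
  ∀ x y : ↥G, (qhDist G ↑x ↑y - C) / M ≤ qhDist G' ↑(f x) ↑(f y) ∧
    qhDist G' ↑(f x) ↑(f y) ≤ M * qhDist G ↑x ↑y + C

/-- `f : G ≃ₜ G'` is freely `φ`-quasiconformal: in every subdomain, the
quasihyperbolic distances of `f` and `f⁻¹` are controlled by `φ`. -/
def FQC (φ : ℝ → ℝ) {G : Set X} {G' : Set Y} (f : ↥G ≃ₜ ↥G') : Prop :=
  ∀ D : Set X, ∀ hD : D ⊆ G, IsDomainSet D →
    ∀ x : X, ∀ hx : x ∈ D, ∀ y : X, ∀ hy : y ∈ D,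
      qhDist (imSet f D) ↑(f ⟨x, hD hx⟩) ↑(f ⟨y, hD hy⟩) ≤ φ (qhDist D x y) ∧
      qhDist D x y ≤ φ (qhDist (imSet f D) ↑(f ⟨x, hD hx⟩) ↑(f ⟨y, hD hy⟩))

end QHDefs

section BoundaryDistance

variable {X : Type*} [MetricSpace X] {G : Set X}

lemma bdist_le_bdist_add_dist (G : Set X) (x y : X) : bdist G x ≤ bdist G y + dist x y :=
  Metric.infDist_le_infDist_add_dist

lemma QCSpace.preconnectedSpace {c : ℝ} (hX : QCSpace c X) : PreconnectedSpace X := by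
  refine ⟨isPreconnected_of_forall_pair fun x _ y _ => ?_⟩
  obtain ⟨γ, L, hγ, -⟩ := hX x y
  exact ⟨γ '' Icc 0 L, subset_univ _, ⟨0, left_mem_Icc.2 hγ.nonneg, hγ.source⟩,
    ⟨L, right_mem_Icc.2 hγ.nonneg, hγ.target⟩, isPreconnected_Icc.image _ hγ.lip.continuousOn⟩

lemma IsProperDomain.bdist_pos [PreconnectedSpace X] (hG : IsProperDomain G) {z : X}
    (hz : z ∈ G) : 0 < bdist G z := by
  have hne : (frontier G).Nonempty := nonempty_frontier_iff.2 ⟨⟨z, hz⟩, hG.2.2⟩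
  refine (isClosed_frontier.notMem_iff_infDist_pos hne).1 fun hzf => ?_
  rw [hG.1.frontier_eq] at hzf
  exact hzf.2 hz

end BoundaryDistance

section CurveEstimates

variable {X : Type*} [MetricSpace X] {G : Set X} {γ : ℝ → X} {L : ℝ} {x y : X}

lemma CurveIn.dist_le (hγ : CurveIn G γ L x y) {s t : ℝ} (hs : 0 ≤ s) (hst : s ≤ t)
    (ht : t ≤ L) : dist (γ s) (γ t) ≤ t - s := by
  have := hγ.lip.dist_le_mul s ⟨hs, hst.trans ht⟩ t ⟨hs.trans hst, ht⟩
  rwa [NNReal.coe_one, one_mul, dist_comm s t, Real.dist_eq, abs_of_nonneg (by linarith)] at this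

lemma CurveIn.continuousOn_bdist (hγ : CurveIn G γ L x y) :
    ContinuousOn (fun t => bdist G (γ t)) (Icc 0 L) :=
  (Metric.continuous_infDist_pt _).comp_continuousOn hγ.lip.continuousOn

lemma CurveIn.continuousOn_density (hpos : ∀ z ∈ G, 0 < bdist G z) (hγ : CurveIn G γ L x y) :
    ContinuousOn (fun t => 1 / bdist G (γ t)) (Icc 0 L) :=
  continuousOn_const.div hγ.continuousOn_bdist fun t ht => (hpos _ (hγ.mem t ht)).ne'

lemma CurveIn.intervalIntegrable_density (hpos : ∀ z ∈ G, 0 < bdist G z)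
    (hγ : CurveIn G γ L x y) :
    IntervalIntegrable (fun t => 1 / bdist G (γ t)) MeasureTheory.volume 0 L :=
  (hγ.continuousOn_density hpos).intervalIntegrable_of_Icc hγ.nonneg

/-- The restriction of a curve to `[s, t]`, translated to start at time `0`. -/
lemma CurveIn.subcurve (hγ : CurveIn G γ L x y) {s t : ℝ} (hs : 0 ≤ s) (hst : s ≤ t)
    (ht : t ≤ L) : CurveIn G (fun u => γ (u + s)) (t - s) (γ s) (γ t) where
  nonneg := by linarith
  lip := LipschitzOnWith.of_dist_le_mul fun u hu v hv => by
    have := hγ.lip.dist_le_mul (u + s) ⟨by linarith [hu.1], by linarith [hu.2]⟩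
      (v + s) ⟨by linarith [hv.1], by linarith [hv.2]⟩
    simpa using this
  source := by simp
  target := by simp
  mem u hu := hγ.mem _ ⟨by linarith [hu.1], by linarith [hu.2]⟩

lemma qhLength_nonneg (hL : 0 ≤ L) : 0 ≤ qhLength G γ L :=
  intervalIntegral.integral_nonneg hL fun _ _ => one_div_nonneg.2 Metric.infDist_nonneg

lemma qhDist_nonneg (G : Set X) (x y : X) : 0 ≤ qhDist G x y := by
  refine Real.sInf_nonneg ?_
  rintro _ ⟨γ, L, hγ, rfl⟩
  exact qhLength_nonneg hγ.nonneg

lemma CurveIn.qhDist_le (hγ : CurveIn G γ L x y) : qhDist G x y ≤ qhLength G γ L := by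
  refine csInf_le ⟨0, ?_⟩ ⟨γ, L, hγ, rfl⟩
  rintro _ ⟨γ, L, hγ, rfl⟩
  exact qhLength_nonneg hγ.nonneg

lemma integral_one_div_add_const {m : ℝ} (hm : 0 < m) (hL : 0 ≤ L) :
    ∫ t in (0 : ℝ)..L, 1 / (t + m) = Real.log (1 + L / m) := by
  rw [intervalIntegral.integral_comp_add_right (fun t => 1 / t) m,
    integral_one_div_of_pos (by linarith) (by linarith)]
  congr 1
  field_simp
  ring

lemma integral_one_div_const_sub_add {m : ℝ} (hm : 0 < m) (hL : 0 ≤ L) :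
    ∫ t in (0 : ℝ)..L, 1 / (L - t + m) = Real.log (1 + L / m) := by
  rw [intervalIntegral.integral_comp_sub_left (fun t => 1 / (t + m)) L]
  simpa using integral_one_div_add_const hm hL

lemma intervalIntegrable_one_div_add_const {m : ℝ} (hm : 0 < m) (hL : 0 ≤ L) :
    IntervalIntegrable (fun t => 1 / (t + m)) MeasureTheory.volume 0 L :=
  ContinuousOn.intervalIntegrable_of_Icc hL <|
    continuousOn_const.div (by fun_prop) fun t ht => by linarith [ht.1]

lemma intervalIntegrable_one_div_const_sub_add {m : ℝ} (hm : 0 < m) (hL : 0 ≤ L) :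
    IntervalIntegrable (fun t => 1 / (L - t + m)) MeasureTheory.volume 0 L :=
  ContinuousOn.intervalIntegrable_of_Icc hL <|
    continuousOn_const.div (by fun_prop) fun t ht => by linarith [ht.2]

/-- Lower bound for the quasihyperbolic distance. -/
lemma log_one_add_dist_div_le_qhDist {b : ℝ} (hpos : ∀ z ∈ G, 0 < bdist G z)
    (hU : IsUniform b G) (hx : x ∈ G) (hy : y ∈ G) :
    Real.log (1 + dist x y / bdist G x) ≤ qhDist G x y := by
  have hδ := hpos x hx
  refine le_csInf ?_ ?_
  · obtain ⟨γ, L, hγ, -⟩ := hU x hx y hy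
    exact ⟨_, γ, L, hγ, rfl⟩
  rintro _ ⟨γ, L, hγ, rfl⟩
  have hxy : dist x y ≤ L := by
    simpa [hγ.source, hγ.target] using hγ.dist_le le_rfl hγ.nonneg le_rfl
  calc Real.log (1 + dist x y / bdist G x) ≤ Real.log (1 + L / bdist G x) := by
        have : 0 ≤ dist x y / bdist G x := by positivity
        exact Real.log_le_log (by linarith) (by gcongr)
    _ = ∫ t in (0 : ℝ)..L, 1 / (t + bdist G x) := (integral_one_div_add_const hδ hγ.nonneg).symm
    _ ≤ qhLength G γ L := by
        refine intervalIntegral.integral_mono_on hγ.nonneg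
          (intervalIntegrable_one_div_add_const hδ hγ.nonneg)
          (hγ.intervalIntegrable_density hpos) fun t ht => ?_
        have h1 := hγ.dist_le le_rfl ht.1 ht.2
        have h2 := bdist_le_bdist_add_dist G (γ t) (γ 0)
        rw [dist_comm, hγ.source] at h2
        rw [hγ.source] at h1
        exact one_div_le_one_div_of_le (hpos _ (hγ.mem t ht)) (by linarith)

/-- In a uniform domain the quasihyperbolic distance is bounded above logarithmically. -/
lemma IsUniform.qhDist_le {b m : ℝ} (hb : 1 ≤ b) (hpos : ∀ z ∈ G, 0 < bdist G z)
    (hU : IsUniform b G) (hx : x ∈ G) (hy : y ∈ G) (hm : 0 < m) (hmx : m ≤ bdist G x)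
    (hmy : m ≤ bdist G y) :
    qhDist G x y ≤ 2 * (1 + 2 * b) * Real.log (1 + b * dist x y / m) := by
  obtain ⟨γ, L, hγ, hL, hcone⟩ := hU x hx y hy
  have hi₁ := intervalIntegrable_one_div_add_const (L := L) hm hγ.nonneg
  have hi₂ := intervalIntegrable_one_div_const_sub_add (L := L) hm hγ.nonneg
  have hL0 := hγ.nonneg
  calc qhDist G x y ≤ qhLength G γ L := hγ.qhDist_le
    _ ≤ ∫ t in (0 : ℝ)..L, (1 + 2 * b) * (1 / (t + m) + 1 / (L - t + m)) := by
        refine intervalIntegral.integral_mono_on hγ.nonneg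
          (hγ.intervalIntegrable_density hpos) ((hi₁.add hi₂).const_mul _) fun t ht => ?_
        have hδ := hpos _ (hγ.mem t ht)
        have hp₁ : 0 < t + m := by linarith [ht.1]
        have hp₂ : 0 < L - t + m := by linarith [ht.2]
        have key : ∀ w, 0 < w → w ≤ (1 + 2 * b) * bdist G (γ t) →
            1 / bdist G (γ t) ≤ (1 + 2 * b) * (1 / w) := fun w hw hwb => by
          rw [mul_one_div, div_le_div_iff₀ hδ hw]
          linarith
        have q₁ : 0 < 1 / (t + m) := by positivity
        have q₂ : 0 < 1 / (L - t + m) := by positivity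
        rcases min_le_iff.1 (hcone t ht) with hc | hc
        · have h1 := hγ.dist_le le_rfl ht.1 ht.2
          have h2 := bdist_le_bdist_add_dist G (γ 0) (γ t)
          rw [hγ.source] at h1 h2
          have := key _ hp₁ (by linarith)
          nlinarith
        · have h1 := hγ.dist_le ht.1 ht.2 le_rfl
          have h2 := bdist_le_bdist_add_dist G (γ L) (γ t)
          rw [dist_comm] at h2
          rw [hγ.target] at h1 h2
          have := key _ hp₂ (by linarith)
          nlinarith
    _ = 2 * (1 + 2 * b) * Real.log (1 + L / m) := by
        rw [intervalIntegral.integral_const_mul, intervalIntegral.integral_add hi₁ hi₂,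
          integral_one_div_add_const hm hL0, integral_one_div_const_sub_add hm hL0]
        ring
    _ ≤ 2 * (1 + 2 * b) * Real.log (1 + b * dist x y / m) := by
        have : 0 ≤ L / m := by positivity
        gcongr

/-- The coarse length of a rectifiable curve is a genuine supremum. -/
lemma CurveIn.bddAbove_coarse_sums (hpos : ∀ z ∈ G, 0 < bdist G z) (hγ : CurveIn G γ L x y)
    {s t h : ℝ} (hs : 0 ≤ s) (ht : t ≤ L) :
    BddAbove {S | ∃ n : ℕ, 0 < n ∧ ∃ u : ℕ → ℝ,
      (∀ i < n, u i ≤ u (i + 1)) ∧ (∀ i ≤ n, u i ∈ Set.Icc s t) ∧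
      (∀ i < n, h ≤ qhDist G (γ (u i)) (γ (u (i + 1)))) ∧
      S = ∑ i ∈ Finset.range n, qhDist G (γ (u i)) (γ (u (i + 1)))} := by
  obtain ⟨M, hM⟩ := isCompact_Icc.bddAbove_image (hγ.continuousOn_density hpos)
  replace hM : ∀ z ∈ Icc 0 L, 1 / bdist G (γ z) ≤ M := fun z hz => hM ⟨z, hz, rfl⟩
  have hM0 : 0 ≤ M :=
    (one_div_nonneg.2 Metric.infDist_nonneg).trans (hM 0 (left_mem_Icc.2 hγ.nonneg))
  refine ⟨M * (t - s), ?_⟩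
  rintro _ ⟨n, -, u, hmono, hmem, -, rfl⟩
  calc ∑ i ∈ Finset.range n, qhDist G (γ (u i)) (γ (u (i + 1)))
      ≤ ∑ i ∈ Finset.range n, M * (u (i + 1) - u i) := by
        refine Finset.sum_le_sum fun i hi => ?_
        have hin := Finset.mem_range.1 hi
        have hu := hmem i hin.le
        have hu' := hmem (i + 1) hin
        have hsub := hγ.subcurve (hs.trans hu.1) (hmono i hin) (hu'.2.trans ht)
        refine hsub.qhDist_le.trans ?_
        calc qhLength G (fun v => γ (v + u i)) (u (i + 1) - u i)
            ≤ ∫ _ in (0 : ℝ)..(u (i + 1) - u i), M := by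
              refine intervalIntegral.integral_mono_on hsub.nonneg
                (hsub.intervalIntegrable_density hpos) intervalIntegrable_const fun v hv => ?_
              exact hM _ ⟨by linarith [hv.1, hu.1], by linarith [hv.2, hu'.2]⟩
          _ = M * (u (i + 1) - u i) := by simp [mul_comm]
    _ = M * (u n - u 0) := by rw [← Finset.mul_sum, Finset.sum_range_sub]
    _ ≤ M * (t - s) := by
        have h0 := (hmem 0 (Nat.zero_le n)).1
        have hn := (hmem n le_rfl).2
        gcongr

lemma SolidArc.sum_qhDist_le {ν h : ℝ} (hpos : ∀ z ∈ G, 0 < bdist G z)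
    (hγ : CurveIn G γ L x y) (hsol : SolidArc G γ L ν h) {s t : ℝ} (hs : 0 ≤ s) (hst : s ≤ t)
    (ht : t ≤ L) {n : ℕ} (hn : 0 < n) {u : ℕ → ℝ} (hmono : ∀ i < n, u i ≤ u (i + 1))
    (hmem : ∀ i ≤ n, u i ∈ Icc s t) (hstep : ∀ i < n, h ≤ qhDist G (γ (u i)) (γ (u (i + 1)))) :
    ∑ i ∈ Finset.range n, qhDist G (γ (u i)) (γ (u (i + 1))) ≤ ν * qhDist G (γ s) (γ t) :=
  (le_csSup (hγ.bddAbove_coarse_sums hpos hs ht) ⟨n, hn, u, hmono, hmem, hstep, rfl⟩).trans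
    (hsol s t hs hst ht)

lemma SolidArc.qhDist_le_max {ν h : ℝ} (hpos : ∀ z ∈ G, 0 < bdist G z)
    (hγ : CurveIn G γ L x y) (hsol : SolidArc G γ L ν h) {s t p q : ℝ} (hs : 0 ≤ s)
    (hsp : s ≤ p) (hpq : p ≤ q) (hqt : q ≤ t) (ht : t ≤ L) :
    qhDist G (γ p) (γ q) ≤ max h (ν * qhDist G (γ s) (γ t)) := by
  rcases le_total (qhDist G (γ p) (γ q)) h with hle | hle
  · exact hle.trans (le_max_left _ _)
  refine le_trans ?_ (le_max_right _ _)
  have := hsol.sum_qhDist_le hpos hγ hs (hsp.trans (hpq.trans hqt)) ht one_pos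
    (u := fun i => if i = 0 then p else q) (by intro i hi; simp_all)
    (by
      intro i _
      by_cases hi : i = 0
      · simpa [hi] using ⟨hsp, hpq.trans hqt⟩
      · simpa [hi] using ⟨hsp.trans hpq, hqt⟩)
    (by intro i hi; simp_all)
  simpa using this

end CurveEstimates

/-- A continuous function on `[a, b]` that reaches the level `r` has a first time of doing so. -/
lemma ContinuousOn.exists_first_hit {f : ℝ → ℝ} {a b r : ℝ} (hf : ContinuousOn f (Icc a b))
    (hr : ∃ z ∈ Icc a b, r ≤ f z) :
    ∃ q ∈ Icc a b, r ≤ f q ∧ ∀ z ∈ Icc a q, f z ≤ max r (f a) := by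
  have hcomp : IsCompact (Icc a b ∩ f ⁻¹' Ici r) :=
    isCompact_Icc.of_isClosed_subset (hf.preimage_isClosed_of_isClosed isClosed_Icc isClosed_Ici)
      inter_subset_left
  obtain ⟨q, ⟨hq, hrq⟩, hmin⟩ := hcomp.exists_isLeast hr
  refine ⟨q, hq, hrq, fun z hz => ?_⟩
  by_contra! hlt
  obtain ⟨hrz, haz⟩ := max_lt_iff.1 hlt
  have hzq : z = q := le_antisymm hz.2 (hmin ⟨⟨hz.1, hz.2.trans hq.2⟩, hrz.le⟩)
  subst hzq
  rcases le_or_gt r (f a) with hra | hra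
  · have haz' : a = z :=
      le_antisymm hz.1 (hmin ⟨left_mem_Icc.2 (hq.1.trans hq.2), hra⟩)
    exact haz.ne (by rw [haz'])
  · obtain ⟨w, hw, hwr⟩ := intermediate_value_Icc hq.1 (hf.mono (Icc_subset_Icc_right hq.2))
      ⟨hra.le, hrq⟩
    have hzw : z ≤ w := hmin ⟨⟨hw.1, hw.2.trans hq.2⟩, hwr.ge⟩
    rw [le_antisymm hw.2 hzw] at hwr
    exact hrz.ne' hwr

/-- A logarithmic bound on a linear quantity bounds it. -/
lemma exists_bound_of_linear_le_log {b B D H : ℝ} (hb : 0 < b) (hB : 0 < B) (hD : 0 < D)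
    (hH : 0 < H) :
    ∃ C, 0 ≤ C ∧ ∀ ρ, 0 ≤ ρ → (ρ / D - 1) * H ≤ B * Real.log (1 + b * ρ) → ρ ≤ C := by
  set E := 2 * B * b * D / H with hE
  have hE0 : 0 < E := by positivity
  refine ⟨max 0 (2 * D / H * (H + B / E + B * Real.log E)), le_max_left _ _, fun ρ hρ hle => ?_⟩
  refine le_trans ?_ (le_max_right _ _)
  have hpos : 0 < 1 + b * ρ := by positivity
  have h1 : Real.log (1 + b * ρ) ≤ (1 + b * ρ) / E + Real.log E := by
    have := Real.log_le_sub_one_of_pos (div_pos hpos hE0)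
    rw [Real.log_div hpos.ne' hE0.ne'] at this
    linarith
  have h2 : B * ((1 + b * ρ) / E + Real.log E) = B / E + ρ * H / (2 * D) + B * Real.log E := by
    rw [hE]
    field_simp
  have h3 : ρ * H / (2 * D) ≤ H + B / E + B * Real.log E := by
    have h4 : (ρ / D - 1) * H = 2 * (ρ * H / (2 * D)) - H := by field_simp
    have := mul_le_mul_of_nonneg_left h1 hB.le
    linarith
  calc ρ = 2 * D / H * (ρ * H / (2 * D)) := by field_simp
    _ ≤ _ := by gcongr

/-- If `φ` grows by at least `n * d` along `[a, b]`, there are `n + 1` successive times at which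
`φ` takes values increasing by steps of `d`. -/
lemma ContinuousOn.exists_equal_steps {φ : ℝ → ℝ} {a b d : ℝ} {n : ℕ}
    (hφ : ContinuousOn φ (Icc a b)) (hab : a ≤ b) (hd : 0 < d) (ha : φ a = 0)
    (hb : n * d ≤ φ b) :
    ∃ u : ℕ → ℝ, (∀ i < n, u i ≤ u (i + 1)) ∧ (∀ i ≤ n, u i ∈ Icc a b) ∧
      ∀ i ≤ n, φ (u i) = i * d := by
  have hex : ∀ i : ℕ, ∃ q, i ≤ n → q ∈ Icc a b ∧ i * d ≤ φ q ∧ ∀ z ∈ Icc a q, φ z ≤ i * d := by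
    intro i
    by_cases hi : i ≤ n
    · have hin : (i : ℝ) * d ≤ n * d := by gcongr
      obtain ⟨q, hq, hle, hmax⟩ := hφ.exists_first_hit ⟨b, right_mem_Icc.2 hab, hin.trans hb⟩
      rw [ha, max_eq_left (by positivity)] at hmax
      exact ⟨q, fun _ => ⟨hq, hle, hmax⟩⟩
    · exact ⟨a, fun h => absurd h hi⟩
  choose u hu using hex
  refine ⟨u, fun i hi => ?_, fun i hi => (hu i hi).1, fun i hi => ?_⟩
  · by_contra! hlt
    have h1 := (hu i hi.le).2.2 (u (i + 1)) ⟨(hu (i + 1) hi).1.1, hlt.le⟩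
    have h2 := (hu (i + 1) hi).2.1
    push_cast at h2
    linarith
  · exact le_antisymm ((hu i hi).2.2 _ (right_mem_Icc.2 (hu i hi).1.1)) (hu i hi).2.1

section SolidArcs

variable {X : Type*} [MetricSpace X] {G : Set X} {γ : ℝ → X} {L : ℝ} {x y : X}

/-- Coarse length of a solid arc staying at depth at most `2 * r` is at least linear in the
distance of its endpoints, measured in units of `r`. -/
lemma SolidArc.linear_le_qhDist {b ν h H r s t : ℝ} (hν : 0 ≤ ν)
    (hpos : ∀ z ∈ G, 0 < bdist G z) (hU : IsUniform b G) (hγ : CurveIn G γ L x y)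
    (hsol : SolidArc G γ L ν h) (hH : 0 < H) (hhH : h ≤ H) (hr : 0 < r) (hs : 0 ≤ s)
    (hst : s ≤ t) (ht : t ≤ L) (hdepth : ∀ z ∈ Icc s t, bdist G (γ z) ≤ 2 * r) :
    (dist (γ s) (γ t) / r / (2 * (Real.exp H - 1)) - 1) * H ≤ ν * qhDist G (γ s) (γ t) := by
  set D := 2 * (Real.exp H - 1) with hD
  have hD0 : 0 < D := by
    have := Real.one_lt_exp_iff.2 hH
    linarith
  have hmemG : ∀ z ∈ Icc s t, γ z ∈ G := fun z hz => hγ.mem z ⟨hs.trans hz.1, hz.2.trans ht⟩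
  have hcont : ContinuousOn (fun z => dist (γ s) (γ z)) (Icc s t) :=
    (continuous_const.dist continuous_id).comp_continuousOn
      (hγ.lip.continuousOn.mono (Icc_subset_Icc hs ht))
  set n := ⌊dist (γ s) (γ t) / r / D⌋₊ with hn
  have hfloor : dist (γ s) (γ t) / r / D - 1 < n := Nat.sub_one_lt_floor _
  have hnle : (n : ℝ) ≤ dist (γ s) (γ t) / r / D := Nat.floor_le (by positivity)
  have hnb : n * (D * r) ≤ dist (γ s) (γ t) := by
    rwa [div_div, le_div_iff₀ (by positivity), mul_comm r D] at hnle
  have hlin : (dist (γ s) (γ t) / r / D - 1) * H ≤ n * H := by gcongr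
  refine hlin.trans ?_
  rcases Nat.eq_zero_or_pos n with h0 | h0
  · rw [h0, Nat.cast_zero, zero_mul]
    exact mul_nonneg hν (qhDist_nonneg _ _ _)
  obtain ⟨u, hmono, hmem, hval⟩ :=
    hcont.exists_equal_steps hst (by positivity : 0 < D * r) (dist_self _) hnb
  have hstep : ∀ i < n, H ≤ qhDist G (γ (u i)) (γ (u (i + 1))) := by
    intro i hi
    have hi₁ := hmem i hi.le
    have hi₂ := hmem (i + 1) hi
    refine le_trans ?_ (log_one_add_dist_div_le_qhDist hpos hU (hmemG _ hi₁) (hmemG _ hi₂))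
    have hδ := hpos _ (hmemG _ hi₁)
    have hdist : D * r ≤ dist (γ (u i)) (γ (u (i + 1))) := by
      have h1 := hval i hi.le
      have h2 := hval (i + 1) hi
      have h3 := dist_triangle (γ s) (γ (u i)) (γ (u (i + 1)))
      push_cast at h2
      linarith
    have hratio : D / 2 ≤ dist (γ (u i)) (γ (u (i + 1))) / bdist G (γ (u i)) := by
      rw [le_div_iff₀ hδ]
      have := mul_le_mul_of_nonneg_left (hdepth _ hi₁) (half_pos hD0).le
      linarith
    rw [Real.le_log_iff_exp_le (by positivity)]
    linarith
  calc (n : ℝ) * H = ∑ _i ∈ Finset.range n, H := by simp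
    _ ≤ ∑ i ∈ Finset.range n, qhDist G (γ (u i)) (γ (u (i + 1))) :=
        Finset.sum_le_sum fun i hi => hstep i (Finset.mem_range.1 hi)
    _ ≤ _ := hsol.sum_qhDist_le hpos hγ hs hst ht h0 hmono hmem
        fun i hi => hhH.trans (hstep i hi)

end SolidArcs

/-- A solid arc in a uniform domain whose endpoints have depth at least `r` and whose points have
depth at most `2 * r` has diameter and depth comparable to `r`. -/
lemma exists_solidArc_layer_bound {b ν h : ℝ} (hb : 1 ≤ b) (hν : 1 ≤ ν) (hh : 0 ≤ h) :
    ∃ C : ℝ, 1 ≤ C ∧ ∀ (X : Type) [MetricSpace X] (G : Set X), (∀ z ∈ G, 0 < bdist G z) →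
      IsUniform b G → ∀ (x y : X) (γ : ℝ → X) (L : ℝ), CurveIn G γ L x y → SolidArc G γ L ν h →
        ∀ r s t : ℝ, 0 < r → 0 ≤ s → s ≤ t → t ≤ L → r ≤ bdist G (γ s) → r ≤ bdist G (γ t) →
          (∀ z ∈ Icc s t, bdist G (γ z) ≤ 2 * r) → ∀ z ∈ Icc s t,
            dist (γ z) (γ s) ≤ C * r ∧ dist (γ z) (γ t) ≤ C * r ∧ r ≤ C * bdist G (γ z) := by
  have hH : 0 < h + 1 := by linarith
  obtain ⟨C₀, hC₀, hbound⟩ := exists_bound_of_linear_le_log (b := b)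
    (B := ν * (2 * (1 + 2 * b))) (D := 2 * (Real.exp (h + 1) - 1)) (H := h + 1)
    (by linarith) (by positivity) (by linarith [Real.one_lt_exp_iff.2 hH]) hH
  set K := max h (ν * (2 * (1 + 2 * b) * Real.log (1 + b * C₀))) with hK
  have hexp : 1 ≤ Real.exp K := Real.one_le_exp (hh.trans (le_max_left _ _))
  refine ⟨2 * Real.exp K, by linarith, ?_⟩
  intro X _ G hpos hU x y γ L hγ hsol r s t hr hs hst ht hrs hrt hdepth z hz
  have hmemG : ∀ w ∈ Icc s t, γ w ∈ G := fun w hw => hγ.mem w ⟨hs.trans hw.1, hw.2.trans ht⟩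
  have hsG := hmemG s (left_mem_Icc.2 hst)
  have htG := hmemG t (right_mem_Icc.2 hst)
  have hupper := hU.qhDist_le hb hpos hsG htG hr hrs hrt
  have hρ : dist (γ s) (γ t) / r ≤ C₀ := by
    refine hbound _ (by positivity) ?_
    calc _ ≤ ν * qhDist G (γ s) (γ t) := hsol.linear_le_qhDist (by linarith) hpos hU hγ hH
          (by linarith) hr hs hst ht hdepth
      _ ≤ ν * (2 * (1 + 2 * b) * Real.log (1 + b * dist (γ s) (γ t) / r)) := by gcongr
      _ = _ := by rw [mul_div_assoc]; ring
  have hqh : ν * qhDist G (γ s) (γ t) ≤ ν * (2 * (1 + 2 * b) * Real.log (1 + b * C₀)) := by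
    refine mul_le_mul_of_nonneg_left (hupper.trans ?_) (by linarith)
    rw [mul_div_assoc]
    gcongr
  have hdist : ∀ p q, s ≤ p → p ≤ q → q ≤ t →
      dist (γ p) (γ q) ≤ (Real.exp K - 1) * bdist G (γ p) := by
    intro p q hsp hpq hqt
    have hpG := hmemG p ⟨hsp, hpq.trans hqt⟩
    have hδ := hpos _ hpG
    have h1 := (log_one_add_dist_div_le_qhDist hpos hU hpG (hmemG q ⟨hsp.trans hpq, hqt⟩)).trans
      ((hsol.qhDist_le_max hpos hγ hs hsp hpq hqt ht).trans (max_le_max_left h hqh))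
    rw [Real.log_le_iff_le_exp (by positivity)] at h1
    rw [← div_le_iff₀ hδ]
    linarith
  have h1 := hdist s z le_rfl hz.1 hz.2
  have h2 := hdist z t hz.1 hz.2 le_rfl
  have h3 := hdepth s (left_mem_Icc.2 hst)
  have h4 := hdepth z hz
  have h5 := bdist_le_bdist_add_dist G (γ t) (γ z)
  have h6 := hpos _ (hmemG z hz)
  rw [dist_comm] at h1 h5
  refine ⟨?_, ?_, ?_⟩ <;> nlinarith

section DyadicLayers

variable {X : Type*} [MetricSpace X] {g : ℝ → X} {f : ℝ → ℝ} {T C : ℝ}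

/-- Up to the first time `p` at which the depth `f` reaches `2 ^ n * f 0`, the curve stays within a
comparable distance of `g p`. -/
lemma dist_le_of_layer_bound (hC : 1 ≤ C) (hf : ContinuousOn f (Icc 0 T)) (h0 : 0 < f 0)
    (hlayer : ∀ r s t : ℝ, 0 < r → 0 ≤ s → s ≤ t → t ≤ T → r ≤ f s → r ≤ f t →
      (∀ z ∈ Icc s t, f z ≤ 2 * r) → ∀ z ∈ Icc s t, dist (g z) (g s) ≤ C * r ∧ r ≤ C * f z)
    (n : ℕ) : ∀ p, 0 ≤ p → p ≤ T → 2 ^ n * f 0 ≤ f p → (∀ z ∈ Icc 0 p, f z ≤ 2 ^ n * f 0) →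
      ∀ z ∈ Icc 0 p, dist (g z) (g p) ≤ 2 * C * (2 ^ n * f 0) := by
  induction n with
  | zero =>
    intro p hp hpT hfp hle z hz
    simp only [pow_zero, one_mul] at hfp hle ⊢
    have hl := hlayer (f 0) 0 p h0 le_rfl hp hpT le_rfl hfp fun w hw => by linarith [hle w hw]
    have h1 := (hl z hz).1
    have h2 := (hl p (right_mem_Icc.2 hp)).1
    have h3 := dist_triangle_right (g z) (g p) (g 0)
    linarith
  | succ n ih =>
    intro s hs hsT hfs hle z hz
    rw [pow_succ] at hfs hle ⊢
    have hr : 0 < 2 ^ n * f 0 := by positivity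
    have hr0 : f 0 ≤ 2 ^ n * f 0 := le_mul_of_one_le_left h0.le (one_le_pow₀ one_le_two)
    obtain ⟨p, hp, hfp, hmax⟩ := (hf.mono (Icc_subset_Icc_right hsT)).exists_first_hit
      (r := 2 ^ n * f 0) ⟨s, right_mem_Icc.2 hs, by linarith⟩
    rw [max_eq_left hr0] at hmax
    have hl := hlayer _ p s hr hp.1 hp.2 hsT hfp (by linarith)
      fun w hw => by linarith [hle w ⟨hp.1.trans hw.1, hw.2⟩]
    have hps := (hl s (right_mem_Icc.2 hp.2)).1
    have h3 := dist_triangle_right (g z) (g s) (g p)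
    have hCr : 0 < C * (2 ^ n * f 0) := by positivity
    rcases le_total z p with hzp | hzp
    · have h1 := ih p hp.1 (hp.2.trans hsT) hfp hmax z ⟨hz.1, hzp⟩
      linarith
    · have h1 := (hl z ⟨hzp, hz.2⟩).1
      linarith

/-- The dyadic layer containing the running maximum of `f` on `[0, u]`. -/
lemma ContinuousOn.exists_dyadic_layer {u : ℝ} (hu : 0 ≤ u) (hf : ContinuousOn f (Icc 0 u))
    (h0 : 0 < f 0) :
    ∃ n : ℕ, ∃ p ∈ Icc 0 u, 2 ^ n * f 0 ≤ f p ∧ (∀ z ∈ Icc 0 p, f z ≤ 2 ^ n * f 0) ∧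
      ∀ z ∈ Icc 0 u, f z ≤ 2 * (2 ^ n * f 0) := by
  obtain ⟨M, hM⟩ := isCompact_Icc.bddAbove_image hf
  obtain ⟨N, hN⟩ := pow_unbounded_of_one_lt (M / f 0) one_lt_two
  rw [div_lt_iff₀ h0] at hN
  have hbound : ∀ z ∈ Icc 0 u, f z ≤ 2 ^ N * f 0 := fun z hz => (hM ⟨z, hz, rfl⟩).trans hN.le
  clear hN
  induction N with
  | zero =>
    simp only [pow_zero, one_mul] at hbound
    refine ⟨0, 0, left_mem_Icc.2 hu, by simp, fun z hz => ?_, fun z hz => ?_⟩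
    · simpa using hbound z ⟨hz.1, hz.2.trans hu⟩
    · linarith [hbound z hz]
  | succ N ih =>
    by_cases hN : ∀ z ∈ Icc 0 u, f z ≤ 2 ^ N * f 0
    · exact ih hN
    push Not at hN
    obtain ⟨v, hv, hvN⟩ := hN
    have hr0 : f 0 ≤ 2 ^ N * f 0 := le_mul_of_one_le_left h0.le (one_le_pow₀ one_le_two)
    obtain ⟨p, hp, hfp, hmax⟩ := hf.exists_first_hit ⟨v, hv, hvN.le⟩
    rw [max_eq_left hr0] at hmax
    refine ⟨N, p, hp, hfp, hmax, fun z hz => (hbound z hz).trans_eq ?_⟩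
    ring

lemma diam_image_le_of_layer_bound (hC : 1 ≤ C) (hf : ContinuousOn f (Icc 0 T)) (h0 : 0 < f 0)
    (hmax : ∀ z ∈ Icc 0 T, f z ≤ f T)
    (hlayer : ∀ r s t : ℝ, 0 < r → 0 ≤ s → s ≤ t → t ≤ T → r ≤ f s → r ≤ f t →
      (∀ z ∈ Icc s t, f z ≤ 2 * r) → ∀ z ∈ Icc s t, dist (g z) (g s) ≤ C * r ∧ r ≤ C * f z)
    {u : ℝ} (hu : u ∈ Icc 0 T) :
    Metric.diam (g '' Icc 0 u) ≤ 4 * C ^ 2 * f u := by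
  obtain ⟨n, p, hp, hfp, hpmax, humax⟩ :=
    (hf.mono (Icc_subset_Icc_right hu.2)).exists_dyadic_layer hu.1 h0
  have hpre := dist_le_of_layer_bound hC hf h0 hlayer n p hp.1 (hp.2.trans hu.2) hfp hpmax
  have hr : 0 < 2 ^ n * f 0 := by positivity
  set r := 2 ^ n * f 0 with hrdef
  obtain ⟨q, hq, hfq, hqmax⟩ := (hf.mono (Icc_subset_Icc_left hu.1)).exists_first_hit
    ⟨T, right_mem_Icc.2 hu.2, hfp.trans (hmax p ⟨hp.1, hp.2.trans hu.2⟩)⟩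
  have hfu := humax u (right_mem_Icc.2 hu.1)
  have hl := hlayer r p q hr hp.1 (hp.2.trans hq.1) hq.2 hfp hfq fun w hw => by
    rcases le_total w u with hwu | hwu
    · exact humax w ⟨hp.1.trans hw.1, hwu⟩
    · exact (hqmax w ⟨hwu, hw.2⟩).trans (max_le (by linarith) hfu)
  have hru := (hl u ⟨hp.2, hq.1⟩).2
  have hclose : ∀ z ∈ Icc 0 u, dist (g z) (g p) ≤ 2 * C * r := by
    intro z hz
    rcases le_total z p with hzp | hzp
    · exact hpre z ⟨hz.1, hzp⟩
    · have h1 := (hl z ⟨hzp, hz.2.trans hq.1⟩).1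
      have hCr : 0 < C * r := by positivity
      linarith
  have hfinal : 2 * C * r + 2 * C * r ≤ 4 * C ^ 2 * f u := by nlinarith
  refine (Metric.diam_le_of_forall_dist_le (by positivity) ?_).trans hfinal
  rintro _ ⟨z, hz, rfl⟩ _ ⟨w, hw, rfl⟩
  exact (dist_triangle_right _ _ (g p)).trans (add_le_add (hclose z hz) (hclose w hw))

end DyadicLayers

/-- Lemma 5(1): There is a constant `μ₂ = μ₂(b,ν,h) ≥ 1` such that
for any `(ν,h)`-solid arc `γ` with endpoints `x, y` in a `b`-uniform proper domain
`G` of a `c`-quasiconvex space, with `x₀ = γ t₀` a point of `γ` maximizing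
`δ_G`, one has `diam(γ[x,u]) ≤ μ₂δ_G(u)` for `u ∈ γ[x,x₀]` and
`diam(γ[y,v]) ≤ μ₂δ_G(v)` for `v ∈ γ[y,x₀]`. -/
theorem stmt9 (b ν h : ℝ) (hb : 1 ≤ b) (hν : 1 ≤ ν) (hh : 0 ≤ h) :
    ∃ μ₂ : ℝ, 1 ≤ μ₂ ∧
      ∀ (X : Type) [MetricSpace X] (c : ℝ), 1 ≤ c → QCSpace c X →
        ∀ G : Set X, IsProperDomain G → IsUniform b G →
          ∀ (x y : X) (γ : ℝ → X) (L : ℝ), CurveIn G γ L x y →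
            SolidArc G γ L ν h →
            ∀ t₀ ∈ Set.Icc 0 L,
              (∀ t ∈ Set.Icc 0 L, bdist G (γ t) ≤ bdist G (γ t₀)) →
              (∀ u ∈ Set.Icc 0 t₀,
                  Metric.diam (γ '' Set.Icc 0 u) ≤ μ₂ * bdist G (γ u)) ∧
              (∀ v ∈ Set.Icc t₀ L,
                  Metric.diam (γ '' Set.Icc v L) ≤ μ₂ * bdist G (γ v)) := by
  obtain ⟨C, hC, hlayer⟩ := exists_solidArc_layer_bound hb hν hh
  refine ⟨4 * C ^ 2, by nlinarith, ?_⟩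
  intro X _ c _ hX G hG hU x y γ L hγ hsol t₀ ht₀ hmax
  have := hX.preconnectedSpace
  have hpos : ∀ z ∈ G, 0 < bdist G z := fun z hz => hG.bdist_pos hz
  have hl := hlayer X G hpos hU x y γ L hγ hsol
  refine ⟨fun u hu => ?_, fun v hv => ?_⟩
  · refine diam_image_le_of_layer_bound (f := fun t => bdist G (γ t)) hC
      (hγ.continuousOn_bdist.mono (Icc_subset_Icc_right ht₀.2))
      (hpos _ (hγ.mem 0 (left_mem_Icc.2 hγ.nonneg)))
      (fun z hz => hmax z ⟨hz.1, hz.2.trans ht₀.2⟩) ?_ hu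
    intro r s t hr hs hst ht hrs hrt hle z hz
    have := hl r s t hr hs hst (ht.trans ht₀.2) hrs hrt hle z hz
    exact ⟨this.1, this.2.2⟩
  · have himage : γ '' Icc v L = (fun t => γ (L - t)) '' Icc 0 (L - v) := by
      rw [← Function.comp_def γ (fun t => L - t), image_comp, image_const_sub_Icc]
      simp
    have hdiam := diam_image_le_of_layer_bound (g := fun t => γ (L - t))
      (f := fun t => bdist G (γ (L - t))) (T := L - t₀) (u := L - v) hC
      (hγ.continuousOn_bdist.comp (by fun_prop)
        fun t ht => ⟨by linarith [ht.2, ht₀.1], by linarith [ht.1]⟩)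
      (hpos _ (hγ.mem _ (by simpa using hγ.nonneg)))
      (fun z hz => by
        simpa using hmax (L - z) ⟨by linarith [hz.2, ht₀.1], by linarith [hz.1]⟩)
      (fun r s t hr hs hst ht hrs hrt hle z hz => by
        have := hl r (L - t) (L - s) hr (by linarith [ht₀.1]) (by linarith) (by linarith) hrt hrs
          (fun w hw => by
            simpa using hle (L - w) ⟨by linarith [hw.2], by linarith [hw.1]⟩)
          (L - z) ⟨by linarith [hz.2], by linarith [hz.1]⟩
        exact this.2)
      ⟨by linarith [hv.2], by linarith [hv.1]⟩
    rw [himage]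
    simpa using hdiam
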